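/- For every τ in the complex upper half-plane ℍ, one has Σ_{k≥0, k≡4 (mod 8)} c(k)·q^{k−1} = −8·η(16τ)⁸/η(8τ)⁷. (That is, the part of the Fourier expansion of A(τ) = η(4τ)⁸/η(8τ)⁷ = Σ_{n≥−1} a(n)qⁿ supported on exponents n ≡ 3 (mod 8) equals −8·η(16τ)⁸/η(8τ)⁷.) -/

import Mathlib

noncomputable section
open Complex Real

/-- `q = e^{2πiτ}`. -/
def nome (τ : ℂ) : ℂ := Complex.exp (2 * (π : ℂ) * I * τ)

/-- Dedekind dedekindEta function `η(τ) = e^{πiτ/12} ∏_{n≥1} (1 − qⁿ)`. -/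
def dedekindEta (τ : ℂ) : ℂ := Complex.exp ((π : ℂ) * I * τ / 12) * ∏' n : ℕ, (1 - nome τ ^ (n + 1))

/-! With `P(q) = ∏ (1 - qⁿ)`, the factors `e^{πiτ/12}` of the eta functions combine so that
`q A(τ) = P(q⁴)⁸ / P(q⁸)⁷`. The exponents congruent to `4` modulo `8` are selected by averaging over
the rotations `q ↦ ζ q` by eighth roots of unity `ζ`; these fix `q⁸` and turn `q⁴` into `±q⁴`, so
the claim becomes Jacobi's *aequatio identica satis abstrusa* `P(x)⁸ - P(-x)⁸ = -16 x P(x⁴)⁸` at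
`x = q⁴`. By the triple product identity, `P(∓x)² / P(x²)` is the theta series `φ(±x)`, where
`φ(x) = ∑ x^(j²)`, so this is a statement about `φ(-x)⁴ - φ(x)⁴`. Splitting `ℤ × ℤ` by the parity of
the sum of the coordinates gives `φ(±x)² = φ(x²)² ± x T(x²)²` with `T(x) = ∑ x^(j(j+1))`, and the
product `φ T` is again a quotient of values of `P`. -/

open Filter Topology

section EulerProduct

/-- The finite `q`-Pochhammer symbol `(q; q)ₙ = ∏_{1 ≤ i ≤ n} (1 - qⁱ)`. -/
def qPochhammer {R : Type*} [CommRing R] (q : R) (n : ℕ) : R :=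
  ∏ i ∈ Finset.range n, (1 - q ^ (i + 1))

lemma qPochhammer_succ {R : Type*} [CommRing R] (q : R) (n : ℕ) :
    qPochhammer q (n + 1) = qPochhammer q n * (1 - q ^ (n + 1)) :=
  Finset.prod_range_succ _ n

variable {𝕜 : Type*} [NormedField 𝕜] {q : 𝕜}

/-- The Euler function `(q; q)_∞ = ∏_{n ≥ 1} (1 - qⁿ)`, that is, `η` without its exponential
factor. -/
def eulerProd (q : 𝕜) : 𝕜 := ∏' n : ℕ, (1 - q ^ (n + 1))

/-- The product `(q; q²)_∞ = ∏_{n ≥ 0} (1 - q²ⁿ⁺¹)` of the factors of odd exponent in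
`eulerProd q`. -/
def oddEulerProd (q : 𝕜) : 𝕜 := ∏' n : ℕ, (1 - q ^ (2 * n + 1))

lemma oddEulerProd_neg (q : 𝕜) : oddEulerProd (-q) = ∏' n : ℕ, (1 + q ^ (2 * n + 1)) :=
  tprod_congr fun n => by rw [(odd_two_mul_add_one n).neg_pow, sub_neg_eq_add]

lemma norm_pow_lt_one (hq : ‖q‖ < 1) {n : ℕ} (hn : n ≠ 0) : ‖q ^ n‖ < 1 := by
  rw [norm_pow]
  exact pow_lt_one₀ (norm_nonneg q) hq hn

lemma one_sub_pow_ne_zero (hq : ‖q‖ < 1) {n : ℕ} (hn : n ≠ 0) : 1 - q ^ n ≠ 0 := fun h => by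
  simpa [← sub_eq_zero.mp h] using norm_pow_lt_one hq hn

lemma qPochhammer_ne_zero (hq : ‖q‖ < 1) (n : ℕ) : qPochhammer q n ≠ 0 :=
  Finset.prod_ne_zero_iff.mpr fun i _ => one_sub_pow_ne_zero hq i.succ_ne_zero

lemma summable_norm_const_mul_pow (hq : ‖q‖ < 1) (c : 𝕜) {a : ℕ} (ha : a ≠ 0) (b : ℕ) :
    Summable fun n : ℕ => ‖c * q ^ (a * n + b)‖ := by
  have geometric : Summable fun n : ℕ => ‖c * q ^ b‖ * ‖q ^ a‖ ^ n :=
    (summable_geometric_of_lt_one (norm_nonneg _) (norm_pow_lt_one hq ha)).mul_left _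
  refine geometric.congr fun n => ?_
  simp only [norm_mul, norm_pow]
  ring

variable [CompleteSpace 𝕜]

lemma multipliable_one_add_const_mul_pow (hq : ‖q‖ < 1) (c : 𝕜) {a : ℕ} (ha : a ≠ 0) (b : ℕ) :
    Multipliable fun n : ℕ => 1 + c * q ^ (a * n + b) :=
  multipliable_one_add_of_summable (summable_norm_const_mul_pow hq c ha b)

lemma multipliable_one_sub_pow_succ (hq : ‖q‖ < 1) : Multipliable fun n : ℕ => 1 - q ^ (n + 1) := by
  simpa [sub_eq_add_neg] using multipliable_one_add_const_mul_pow hq (-1) one_ne_zero 1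

lemma multipliable_one_add_pow_succ (hq : ‖q‖ < 1) : Multipliable fun n : ℕ => 1 + q ^ (n + 1) := by
  simpa using multipliable_one_add_const_mul_pow hq 1 one_ne_zero 1

lemma multipliable_one_sub_pow_odd (hq : ‖q‖ < 1) :
    Multipliable fun n : ℕ => 1 - q ^ (2 * n + 1) := by
  simpa [sub_eq_add_neg] using multipliable_one_add_const_mul_pow hq (-1) two_ne_zero 1

lemma eulerProd_ne_zero (hq : ‖q‖ < 1) : eulerProd q ≠ 0 := by
  have hne (n : ℕ) : 1 + -1 * q ^ (1 * n + 1) ≠ 0 := by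
    simpa [sub_eq_add_neg] using one_sub_pow_ne_zero hq n.succ_ne_zero
  simpa [eulerProd, sub_eq_add_neg] using
    tprod_one_add_ne_zero_of_summable hne (summable_norm_const_mul_pow hq (-1) one_ne_zero 1)

lemma tendsto_qPochhammer (hq : ‖q‖ < 1) :
    Tendsto (qPochhammer q) atTop (𝓝 (eulerProd q)) :=
  (multipliable_one_sub_pow_succ hq).hasProd.tendsto_prod_nat

lemma eulerProd_eq_oddEulerProd_mul (hq : ‖q‖ < 1) :
    eulerProd q = oddEulerProd q * eulerProd (q ^ 2) := by
  have exponent (n : ℕ) : (q ^ 2) ^ (n + 1) = q ^ (2 * n + 1 + 1) := by ring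
  have hq2 := multipliable_one_sub_pow_succ (norm_pow_lt_one hq two_ne_zero)
  simp only [exponent] at hq2
  simp only [eulerProd, oddEulerProd, exponent]
  exact (tprod_even_mul_odd (f := fun n => 1 - q ^ (n + 1))
    (multipliable_one_sub_pow_odd hq) hq2).symm

lemma oddEulerProd_mul_oddEulerProd_neg (hq : ‖q‖ < 1) :
    oddEulerProd q * oddEulerProd (-q) = oddEulerProd (q ^ 2) := by
  rw [oddEulerProd, oddEulerProd, ← (multipliable_one_sub_pow_odd hq).tprod_mul
    (multipliable_one_sub_pow_odd (by rwa [norm_neg]))]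
  refine tprod_congr fun n => ?_
  rw [(odd_two_mul_add_one n).neg_pow]
  ring

lemma eulerProd_mul_eulerProd_neg (hq : ‖q‖ < 1) :
    eulerProd q * eulerProd (-q) * eulerProd (q ^ 4) = eulerProd (q ^ 2) ^ 3 := by
  have h₁ := eulerProd_eq_oddEulerProd_mul hq
  have h₂ : eulerProd (-q) = oddEulerProd (-q) * eulerProd (q ^ 2) := by
    simpa using eulerProd_eq_oddEulerProd_mul (q := -q) (by rwa [norm_neg])
  have h₃ : eulerProd (q ^ 2) = oddEulerProd (q ^ 2) * eulerProd (q ^ 4) := by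
    simpa [← pow_mul] using eulerProd_eq_oddEulerProd_mul (norm_pow_lt_one hq two_ne_zero)
  calc eulerProd q * eulerProd (-q) * eulerProd (q ^ 4)
    _ = (oddEulerProd q * oddEulerProd (-q)) * eulerProd (q ^ 4) * eulerProd (q ^ 2) ^ 2 := by
      rw [h₁, h₂]; ring
    _ = eulerProd (q ^ 2) ^ 3 := by
      rw [oddEulerProd_mul_oddEulerProd_neg hq, ← h₃]; ring

lemma eulerProd_mul_tprod_one_add_pow_succ (hq : ‖q‖ < 1) :
    eulerProd q * ∏' n : ℕ, (1 + q ^ (n + 1)) = eulerProd (q ^ 2) := by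
  rw [eulerProd, ← (multipliable_one_sub_pow_succ hq).tprod_mul (multipliable_one_add_pow_succ hq)]
  exact tprod_congr fun n => by ring

lemma tprod_one_add_pow (hq : ‖q‖ < 1) :
    ∏' n : ℕ, (1 + q ^ n) = 2 * ∏' n : ℕ, (1 + q ^ (n + 1)) := by
  simpa only [pow_zero, one_add_one_eq_two] using
    tprod_eq_zero_mul' (f := fun n => 1 + q ^ n) (multipliable_one_add_pow_succ hq)

end EulerProduct

section GaussianBinomial

/-- The Gaussian binomial coefficient, defined by the `q`-Pascal recursion, so that it makes sense
over any commutative semiring. -/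
def gaussBinom {R : Type*} [CommSemiring R] (q : R) : ℕ → ℕ → R
  | _, 0 => 1
  | 0, _ + 1 => 0
  | n + 1, k + 1 => gaussBinom q n k + q ^ (k + 1) * gaussBinom q n (k + 1)

section CommSemiring

variable {R : Type*} [CommSemiring R] (q : R)

@[simp]
lemma gaussBinom_zero_right (n : ℕ) : gaussBinom q n 0 = 1 := by
  cases n <;> rfl

lemma gaussBinom_succ_succ (n k : ℕ) :
    gaussBinom q (n + 1) (k + 1) = gaussBinom q n k + q ^ (k + 1) * gaussBinom q n (k + 1) :=
  rfl

lemma gaussBinom_eq_zero_of_lt {n k : ℕ} (h : n < k) : gaussBinom q n k = 0 := by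
  induction n generalizing k with
  | zero => obtain ⟨k, rfl⟩ := Nat.exists_eq_succ_of_ne_zero h.ne'; rfl
  | succ n ih =>
    obtain ⟨k, rfl⟩ := Nat.exists_eq_succ_of_ne_zero (Nat.ne_zero_of_lt h)
    rw [gaussBinom_succ_succ, ih (by omega), ih (by omega), mul_zero, add_zero]

@[simp]
lemma gaussBinom_self (n : ℕ) : gaussBinom q n n = 1 := by
  induction n with
  | zero => rfl
  | succ n ih =>
    rw [gaussBinom_succ_succ, ih, gaussBinom_eq_zero_of_lt q n.lt_succ_self, mul_zero, add_zero]

theorem prod_one_add_mul_pow_eq_sum_gaussBinom (y : R) (n : ℕ) :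
    ∏ i ∈ Finset.range n, (1 + y * q ^ i) =
      ∑ k ∈ Finset.range (n + 1), gaussBinom q n k * q ^ k.choose 2 * y ^ k := by
  induction n generalizing y with
  | zero => simp
  | succ n ih =>
    let a (k : ℕ) : R := gaussBinom q n k * q ^ k.choose 2 * (y * q) ^ k
    have pascal (k : ℕ) : gaussBinom q (n + 1) (k + 1) * q ^ (k + 1).choose 2 * y ^ (k + 1) =
        a (k + 1) + y * a k := by
      simp only [a, gaussBinom_succ_succ, Nat.choose_succ_succ' k 1, Nat.choose_one_right]
      ring
    calc ∏ i ∈ Finset.range (n + 1), (1 + y * q ^ i)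
      _ = (1 + y) * ∏ i ∈ Finset.range n, (1 + y * q * q ^ i) := by
        rw [Finset.prod_range_succ', pow_zero, mul_one, mul_comm]
        exact congrArg _ (Finset.prod_congr rfl fun i _ => by ring)
      _ = ∑ k ∈ Finset.range (n + 1), a k + y * ∑ k ∈ Finset.range (n + 1), a k := by
        rw [ih]; ring
      _ = ∑ k ∈ Finset.range (n + 1), (a (k + 1) + y * a k) + a 0 := by
        have top : a (n + 1) = 0 := by simp [a, gaussBinom_eq_zero_of_lt]
        rw [Finset.sum_add_distrib, ← Finset.mul_sum, add_right_comm, ← Finset.sum_range_succ',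
          Finset.sum_range_succ _ (n + 1), top, add_zero]
      _ = _ := by
        rw [Finset.sum_range_succ' _ (n + 1), Finset.sum_congr rfl fun k _ => pascal k]
        simp [a]

end CommSemiring

lemma gaussBinom_mul_qPochhammer_mul {R : Type*} [CommRing R] (q : R) (m k : ℕ) :
    gaussBinom q (m + k) k * (qPochhammer q m * qPochhammer q k) = qPochhammer q (m + k) := by
  induction k generalizing m with
  | zero => simp [qPochhammer]
  | succ k ihk =>
    induction m with
    | zero => simp [qPochhammer]
    | succ m ihm =>
      have left : gaussBinom q (m + 1 + k) k * (qPochhammer q (m + 1) * qPochhammer q k) =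
          qPochhammer q (m + 1 + k) := ihk (m + 1)
      have right : gaussBinom q (m + 1 + k) (k + 1) *
          (qPochhammer q m * qPochhammer q (k + 1)) = qPochhammer q (m + 1 + k) := by
        rwa [Nat.add_right_comm m 1 k]
      rw [qPochhammer_succ q m] at left
      rw [qPochhammer_succ q k] at right
      rw [← Nat.add_assoc (m + 1) k 1, gaussBinom_succ_succ, qPochhammer_succ q m,
        qPochhammer_succ q k, qPochhammer_succ q (m + 1 + k)]
      linear_combination (1 - q ^ (k + 1)) * left + q ^ (k + 1) * (1 - q ^ (m + 1)) * right

variable {𝕜 : Type*} [NormedField 𝕜] {q : 𝕜}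

lemma gaussBinom_add_right_eq_div (hq : ‖q‖ < 1) (m k : ℕ) :
    gaussBinom q (m + k) k = qPochhammer q (m + k) / (qPochhammer q m * qPochhammer q k) :=
  eq_div_of_mul_eq (mul_ne_zero (qPochhammer_ne_zero hq m) (qPochhammer_ne_zero hq k))
    (gaussBinom_mul_qPochhammer_mul q m k)

lemma exists_norm_gaussBinom_le [CompleteSpace 𝕜] (hq : ‖q‖ < 1) :
    ∃ C, ∀ n k, ‖gaussBinom q n k‖ ≤ C := by
  have hlim := tendsto_qPochhammer hq
  obtain ⟨A, hA⟩ := (Metric.isBounded_range_of_tendsto _ hlim).exists_norm_le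
  obtain ⟨B, hB⟩ := (Metric.isBounded_range_of_tendsto _
    (hlim.inv₀ (eulerProd_ne_zero hq))).exists_norm_le
  rw [Set.forall_mem_range] at hA hB
  have hA₀ : 0 ≤ A := (norm_nonneg _).trans (hA 0)
  have hB₀ : 0 ≤ B := (norm_nonneg _).trans (hB 0)
  refine ⟨A * (B * B), fun n k => ?_⟩
  obtain h | h := lt_or_ge n k
  · rw [gaussBinom_eq_zero_of_lt q h, norm_zero]
    positivity
  · obtain ⟨m, rfl⟩ := Nat.exists_eq_add_of_le' h
    rw [gaussBinom_add_right_eq_div hq, div_eq_mul_inv, mul_inv, norm_mul, norm_mul]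
    exact mul_le_mul (hA _) (mul_le_mul (hB m) (hB k) (norm_nonneg _) hB₀) (by positivity) hA₀

lemma tendsto_gaussBinom [CompleteSpace 𝕜] (hq : ‖q‖ < 1) {ι : Type*} {l : Filter ι}
    {a b : ι → ℕ} (ha : Tendsto a l atTop) (hb : Tendsto b l atTop) :
    Tendsto (fun i => gaussBinom q (a i + b i) (b i)) l (𝓝 (eulerProd q)⁻¹) := by
  have hlim := tendsto_qPochhammer hq
  have hne := eulerProd_ne_zero hq
  have := (hlim.comp (tendsto_atTop_mono (fun i => (a i).le_add_right (b i)) ha)).div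
    ((hlim.comp ha).mul (hlim.comp hb)) (mul_ne_zero hne hne)
  rw [div_mul_cancel_left₀ hne] at this
  exact this.congr fun i => (gaussBinom_add_right_eq_div hq _ _).symm

end GaussianBinomial

section JacobiTripleProduct

lemma prod_one_add_mul_pow_odd_eq_sum_gaussBinom {R : Type*} [CommSemiring R] (x z : R) (N : ℕ) :
    ∏ i ∈ Finset.range N, (1 + z * x ^ (2 * i + 1)) =
      ∑ k ∈ Finset.range (N + 1), gaussBinom (x ^ 2) N k * (x ^ (k ^ 2) * z ^ k) := by
  have exponent (k : ℕ) : 2 * k.choose 2 + k = k ^ 2 := by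
    rw [Nat.choose_two_right, Nat.mul_div_cancel' k.even_mul_pred_self.two_dvd]
    cases k with
    | zero => rfl
    | succ k => rw [Nat.add_sub_cancel]; ring
  calc _ = ∏ i ∈ Finset.range N, (1 + z * x * (x ^ 2) ^ i) :=
        Finset.prod_congr rfl fun i _ => by ring
    _ = _ := by
        rw [prod_one_add_mul_pow_eq_sum_gaussBinom]
        refine Finset.sum_congr rfl fun k _ => ?_
        rw [← exponent]
        ring

theorem prod_mul_prod_eq_sum_gaussBinom_mul_zpow {K : Type*} [Field K] {x z : K} (hx : x ≠ 0)
    (hz : z ≠ 0) (M N : ℕ) :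
    (∏ i ∈ Finset.range M, (1 + z⁻¹ * x ^ (2 * i + 1))) *
        ∏ i ∈ Finset.range N, (1 + z * x ^ (2 * i + 1)) =
      ∑ k ∈ Finset.range (M + N + 1),
        gaussBinom (x ^ 2) (M + N) k * (x ^ ((k - M : ℤ) ^ 2) * z ^ (k - M : ℤ)) := by
  induction M generalizing N z with
  | zero =>
    rw [Finset.prod_range_zero, one_mul, prod_one_add_mul_pow_odd_eq_sum_gaussBinom, zero_add]
    refine Finset.sum_congr rfl fun k _ => ?_
    rw [Nat.cast_zero, sub_zero, zpow_natCast, ← Nat.cast_pow, zpow_natCast]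
  | succ M ih =>
    have hw : z * (x ^ 2)⁻¹ ≠ 0 := mul_ne_zero hz (inv_ne_zero (pow_ne_zero 2 hx))
    have left (i : ℕ) :
        (z * (x ^ 2)⁻¹)⁻¹ * x ^ (2 * i + 1) = z⁻¹ * x ^ (2 * (i + 1) + 1) := by
      field_simp
      ring
    have right (i : ℕ) : z * (x ^ 2)⁻¹ * x ^ (2 * (i + 1) + 1) = z * x ^ (2 * i + 1) := by
      field_simp
      ring
    have summand (j : ℤ) : z⁻¹ * x * (x ^ (j ^ 2) * (z * (x ^ 2)⁻¹) ^ j) =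
        x ^ ((j - 1) ^ 2) * z ^ (j - 1) := by
      rw [show (j - 1) ^ 2 = j ^ 2 - 2 * j + 1 by ring, zpow_add_one₀ hx, zpow_sub₀ hx,
        zpow_sub_one₀ hz, mul_zpow, inv_zpow, zpow_mul x 2, zpow_ofNat]
      ring
    -- `1 + z⁻¹x = z⁻¹x (1 + zx⁻¹)` moves one factor to the other product; `z ↦ zx⁻²` absorbs it.
    calc _ = z⁻¹ * x * ((∏ i ∈ Finset.range M, (1 + (z * (x ^ 2)⁻¹)⁻¹ * x ^ (2 * i + 1))) *
          ∏ i ∈ Finset.range (N + 1), (1 + z * (x ^ 2)⁻¹ * x ^ (2 * i + 1))) := by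
          simp only [Finset.prod_range_succ', left, right]
          field_simp
          ring
      _ = _ := by
          rw [ih hw, Finset.mul_sum, Nat.add_right_comm M 1 N, ← Nat.add_assoc M N 1]
          refine Finset.sum_congr rfl fun k _ => ?_
          rw [mul_left_comm, summand, Nat.cast_succ, sub_sub]

/-- The Gaussian binomial coefficient `[2N, N + j]` indexed by its offset `j` from the centre, and
extended by zero to all integers `j`. -/
def centeredGaussBinom {R : Type*} [CommSemiring R] (q : R) (N : ℕ) (j : ℤ) : R :=
  if -(N : ℤ) ≤ j then gaussBinom q (N + N) (j + N).toNat else 0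

variable {𝕜 : Type*} [NormedField 𝕜] {x : 𝕜}

lemma tsum_centeredGaussBinom_mul_zpow (hx : x ≠ 0) {z : 𝕜} (hz : z ≠ 0) (N : ℕ) :
    ∑' j : ℤ, centeredGaussBinom (x ^ 2) N j * (x ^ (j ^ 2) * z ^ j) =
      (∏ i ∈ Finset.range N, (1 + z⁻¹ * x ^ (2 * i + 1))) *
        ∏ i ∈ Finset.range N, (1 + z * x ^ (2 * i + 1)) := by
  let center : ℕ ↪ ℤ := ⟨fun k => k - N, fun a b h => by simpa using h⟩
  have hcenter (k : ℕ) : center k = k - N := rfl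
  rw [prod_mul_prod_eq_sum_gaussBinom_mul_zpow hx hz,
    tsum_eq_sum (s := (Finset.range (N + N + 1)).map center), Finset.sum_map]
  · simp [hcenter, centeredGaussBinom]
  · intro j hj
    rw [centeredGaussBinom]
    split_ifs with hlow
    · have hhigh : N + N < (j + N).toNat := by
        by_contra! h
        exact hj (Finset.mem_map.mpr ⟨(j + N).toNat, by simpa [Nat.lt_succ_iff] using h,
          by rw [hcenter]; omega⟩)
      rw [gaussBinom_eq_zero_of_lt _ hhigh, zero_mul]
    · rw [zero_mul]

lemma summable_norm_zpow_sq_mul_zpow (hx : ‖x‖ < 1) (z : 𝕜) :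
    Summable fun j : ℤ => ‖x ^ (j ^ 2) * z ^ j‖ := by
  have half (w : 𝕜) : Summable fun n : ℕ => ‖x ^ (n ^ 2) * w ^ n‖ := by
    have ratio : Tendsto (fun n : ℕ => ‖x ^ (2 * n + 1) * w‖) atTop (𝓝 0) := by
      simpa only [mul_comm w] using
        (summable_norm_const_mul_pow hx w two_ne_zero 1).tendsto_atTop_zero
    refine summable_of_ratio_norm_eventually_le (r := 1 / 2) (by norm_num) ?_
    filter_upwards [ratio.eventually_le_const (by norm_num : (0 : ℝ) < 1 / 2)] with n hn
    calc _ = ‖x ^ (2 * n + 1) * w‖ * ‖‖x ^ (n ^ 2) * w ^ n‖‖ := by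
          rw [norm_norm, norm_norm, ← norm_mul]; ring_nf
      _ ≤ _ := by gcongr
  refine Summable.of_nat_of_neg ?_ ?_
  · refine (half z).congr fun n => ?_
    rw [zpow_natCast, ← Nat.cast_pow, zpow_natCast]
  · refine (half z⁻¹).congr fun n => ?_
    rw [zpow_neg, zpow_natCast, neg_sq, ← Nat.cast_pow, zpow_natCast, inv_pow]

variable [CompleteSpace 𝕜]

lemma tendsto_centeredGaussBinom {q : 𝕜} (hq : ‖q‖ < 1) (j : ℤ) :
    Tendsto (centeredGaussBinom q · j) atTop (𝓝 (eulerProd q)⁻¹) := by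
  have hminus : Tendsto (fun N : ℕ => (N - j : ℤ).toNat) atTop atTop :=
    tendsto_atTop_atTop.mpr fun b => ⟨b + j.natAbs, fun N hN => by omega⟩
  have hplus : Tendsto (fun N : ℕ => (j + N : ℤ).toNat) atTop atTop :=
    tendsto_atTop_atTop.mpr fun b => ⟨b + j.natAbs, fun N hN => by omega⟩
  refine (tendsto_gaussBinom hq hminus hplus).congr' ?_
  filter_upwards [eventually_ge_atTop j.natAbs] with N hN
  rw [centeredGaussBinom, if_pos (by omega)]
  congr 1
  omega

theorem tsum_zpow_sq_mul_zpow (hx : ‖x‖ < 1) (hx₀ : x ≠ 0) {z : 𝕜} (hz : z ≠ 0) :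
    ∑' j : ℤ, x ^ (j ^ 2) * z ^ j =
      eulerProd (x ^ 2) * ((∏' n : ℕ, (1 + z⁻¹ * x ^ (2 * n + 1))) *
        ∏' n : ℕ, (1 + z * x ^ (2 * n + 1))) := by
  have hx2 := norm_pow_lt_one hx two_ne_zero
  obtain ⟨C, hC⟩ := exists_norm_gaussBinom_le hx2
  have bound (N : ℕ) (j : ℤ) : ‖centeredGaussBinom (x ^ 2) N j * (x ^ (j ^ 2) * z ^ j)‖ ≤
      C * ‖x ^ (j ^ 2) * z ^ j‖ := by
    rw [norm_mul, centeredGaussBinom]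
    gcongr
    split_ifs
    exacts [hC _ _, by simpa using (norm_nonneg _).trans (hC 0 0)]
  have sum_lim := tendsto_tsum_of_dominated_convergence
    ((summable_norm_zpow_sq_mul_zpow hx z).mul_left C)
    (fun j => (tendsto_centeredGaussBinom hx2 j).mul_const (x ^ (j ^ 2) * z ^ j))
    (Eventually.of_forall bound)
  have prod_lim (w : 𝕜) :=
    (multipliable_one_add_const_mul_pow hx w two_ne_zero 1).hasProd.tendsto_prod_nat
  simp only [tsum_centeredGaussBinom_mul_zpow hx₀ hz, tsum_mul_left] at sum_lim
  rw [← tendsto_nhds_unique sum_lim ((prod_lim z⁻¹).mul (prod_lim z)),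
    mul_inv_cancel_left₀ (eulerProd_ne_zero hx2)]

end JacobiTripleProduct

section ThetaFunctions

lemma tsum_int_prod_eq_add_of_parity {E : Type*} [NormedAddCommGroup E]
    [CompleteSpace E] {f : ℤ × ℤ → E} (hf : Summable f) :
    ∑' p, f p = ∑' p : ℤ × ℤ, f (p.1 + p.2, p.1 - p.2) +
      ∑' p : ℤ × ℤ, f (p.1 + p.2 + 1, p.1 - p.2) := by
  let even (p : ℤ × ℤ) : ℤ × ℤ := (p.1 + p.2, p.1 - p.2)
  let odd (p : ℤ × ℤ) : ℤ × ℤ := (p.1 + p.2 + 1, p.1 - p.2)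
  have even_inj : Function.Injective even := fun p q h => by
    simp only [even, Prod.ext_iff] at h ⊢
    omega
  have odd_inj : Function.Injective odd := fun p q h => by
    simp only [odd, Prod.ext_iff] at h ⊢
    omega
  have partition : IsCompl (Set.range even) (Set.range odd) := by
    refine ⟨Set.disjoint_iff_forall_ne.mpr ?_, codisjoint_iff.mpr ?_⟩
    · rintro _ ⟨p, rfl⟩ _ ⟨q, rfl⟩ h
      simp only [even, odd, Prod.ext_iff] at h
      omega
    · refine Set.eq_univ_of_forall fun ⟨m, n⟩ => ?_
      obtain h | h := Int.emod_two_eq_zero_or_one (m + n)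
      · exact Or.inl ⟨((m + n) / 2, (m - n) / 2), by simp only [even, Prod.ext_iff]; omega⟩
      · exact Or.inr ⟨((m + n) / 2, (m - n) / 2), by simp only [odd, Prod.ext_iff]; omega⟩
  refine HasSum.tsum_eq (HasSum.add_isCompl partition ?_ ?_)
  · exact (even_inj.hasSum_range_iff).mpr (hf.comp_injective even_inj).hasSum
  · exact (odd_inj.hasSum_range_iff).mpr (hf.comp_injective odd_inj).hasSum

lemma tsum_mul_tsum_eq_add_of_parity {R : Type*} [NormedRing R] [CompleteSpace R] {f g : ℤ → R}
    (hf : Summable fun j => ‖f j‖) (hg : Summable fun j => ‖g j‖) :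
    (∑' j, f j) * ∑' j, g j = ∑' p : ℤ × ℤ, f (p.1 + p.2) * g (p.1 - p.2) +
      ∑' p : ℤ × ℤ, f (p.1 + p.2 + 1) * g (p.1 - p.2) := by
  rw [tsum_mul_tsum_of_summable_norm hf hg]
  exact tsum_int_prod_eq_add_of_parity
    (f := fun p => f p.1 * g p.2) (summable_mul_of_summable_norm hf hg)

variable {𝕜 : Type*} [NormedField 𝕜] {x : 𝕜}

/-- The theta series `φ(x) = ∑ x^(j²)` over all integers `j`. -/
def squareTheta (x : 𝕜) : 𝕜 := ∑' j : ℤ, x ^ (j ^ 2)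

/-- The theta series `∑ x^(j(j+1))` over all integers `j`, which is `2ψ(x²)` in Ramanujan's
notation. -/
def pronicTheta (x : 𝕜) : 𝕜 := ∑' j : ℤ, x ^ (j * (j + 1))

lemma summable_norm_zpow_sq (hx : ‖x‖ < 1) : Summable fun j : ℤ => ‖x ^ (j ^ 2)‖ := by
  simpa only [one_zpow, mul_one] using summable_norm_zpow_sq_mul_zpow hx 1

lemma summable_norm_zpow_mul_succ (hx : ‖x‖ < 1) (hx₀ : x ≠ 0) :
    Summable fun j : ℤ => ‖x ^ (j * (j + 1))‖ := by
  refine (summable_norm_zpow_sq_mul_zpow hx x).congr fun j => ?_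
  rw [← zpow_add₀ hx₀]
  ring_nf

variable [CompleteSpace 𝕜]

lemma squareTheta_mul_eulerProd (hx : ‖x‖ < 1) (hx₀ : x ≠ 0) :
    squareTheta x * eulerProd (x ^ 2) = eulerProd (-x) ^ 2 := by
  have triple : squareTheta x = eulerProd (x ^ 2) * oddEulerProd (-x) ^ 2 := by
    simpa only [one_zpow, inv_one, mul_one, one_mul, ← oddEulerProd_neg, ← sq, squareTheta] using
      tsum_zpow_sq_mul_zpow hx hx₀ one_ne_zero
  have split : eulerProd (-x) = oddEulerProd (-x) * eulerProd (x ^ 2) := by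
    simpa only [neg_sq] using eulerProd_eq_oddEulerProd_mul (q := -x) (by rwa [norm_neg])
  rw [triple, split]
  ring

lemma pronicTheta_mul_eulerProd (hx : ‖x‖ < 1) (hx₀ : x ≠ 0) :
    pronicTheta x * eulerProd (x ^ 2) = 2 * eulerProd (x ^ 4) ^ 2 := by
  have hx2 := norm_pow_lt_one hx two_ne_zero
  have summand (j : ℤ) : x ^ (j * (j + 1)) = x ^ (j ^ 2) * x ^ j := by
    rw [← zpow_add₀ hx₀]
    ring_nf
  have factor_neg (n : ℕ) : 1 + x⁻¹ * x ^ (2 * n + 1) = 1 + (x ^ 2) ^ n := by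
    field_simp
    ring
  have factor_pos (n : ℕ) : 1 + x * x ^ (2 * n + 1) = 1 + (x ^ 2) ^ (n + 1) := by ring
  have euler : eulerProd (x ^ 2) * ∏' n : ℕ, (1 + (x ^ 2) ^ (n + 1)) = eulerProd (x ^ 4) := by
    rw [eulerProd_mul_tprod_one_add_pow_succ hx2, ← pow_mul]
  simp only [pronicTheta, summand, tsum_zpow_sq_mul_zpow hx hx₀ hx₀, factor_neg, factor_pos,
    tprod_one_add_pow hx2, ← euler]
  ring

lemma squareTheta_sq (hx : ‖x‖ < 1) (hx₀ : x ≠ 0) :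
    squareTheta x ^ 2 = squareTheta (x ^ 2) ^ 2 + x * pronicTheta (x ^ 2) ^ 2 := by
  have hx2 := norm_pow_lt_one hx two_ne_zero
  have hx2₀ := pow_ne_zero 2 hx₀
  have square := summable_norm_zpow_sq hx
  have square2 := summable_norm_zpow_sq hx2
  have pronic2 := summable_norm_zpow_mul_succ hx2 hx2₀
  have even_part (p : ℤ × ℤ) : x ^ ((p.1 + p.2) ^ 2) * x ^ ((p.1 - p.2) ^ 2) =
      (x ^ 2) ^ (p.1 ^ 2) * (x ^ 2) ^ (p.2 ^ 2) := by
    rw [← zpow_add₀ hx₀, ← zpow_add₀ hx2₀, ← zpow_natCast x 2, ← zpow_mul]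
    congr 1
    push_cast
    ring
  have odd_part (p : ℤ × ℤ) : x ^ ((p.1 + p.2 + 1) ^ 2) * x ^ ((p.1 - p.2) ^ 2) =
      x * ((x ^ 2) ^ (p.1 * (p.1 + 1)) * (x ^ 2) ^ (p.2 * (p.2 + 1))) := by
    rw [← zpow_add₀ hx₀, ← zpow_add₀ hx2₀, ← zpow_natCast x 2, ← zpow_mul, ← zpow_one_add₀ hx₀]
    congr 1
    push_cast
    ring
  calc squareTheta x ^ 2
    _ = ∑' p : ℤ × ℤ, x ^ ((p.1 + p.2) ^ 2) * x ^ ((p.1 - p.2) ^ 2) +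
        ∑' p : ℤ × ℤ, x ^ ((p.1 + p.2 + 1) ^ 2) * x ^ ((p.1 - p.2) ^ 2) := by
        rw [sq, squareTheta]
        exact tsum_mul_tsum_eq_add_of_parity square square
    _ = ∑' p : ℤ × ℤ, (x ^ 2) ^ (p.1 ^ 2) * (x ^ 2) ^ (p.2 ^ 2) +
        x * ∑' p : ℤ × ℤ, (x ^ 2) ^ (p.1 * (p.1 + 1)) * (x ^ 2) ^ (p.2 * (p.2 + 1)) := by
        rw [← tsum_mul_left, tsum_congr even_part, tsum_congr odd_part]
    _ = squareTheta (x ^ 2) ^ 2 + x * pronicTheta (x ^ 2) ^ 2 := by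
        rw [← tsum_mul_tsum_of_summable_norm square2 square2, ←
          tsum_mul_tsum_of_summable_norm pronic2 pronic2, ← sq, ← sq, squareTheta, pronicTheta]

lemma squareTheta_mul_pronicTheta_mul_eulerProd_sq (hx : ‖x‖ < 1) (hx₀ : x ≠ 0) :
    squareTheta x * pronicTheta x * eulerProd x ^ 2 = 2 * eulerProd (x ^ 2) ^ 4 := by
  have hP : eulerProd (x ^ 2) ^ 2 ≠ 0 :=
    pow_ne_zero 2 (eulerProd_ne_zero (norm_pow_lt_one hx two_ne_zero))
  refine mul_right_cancel₀ hP ?_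
  calc _ = (squareTheta x * eulerProd (x ^ 2)) * (pronicTheta x * eulerProd (x ^ 2)) *
        eulerProd x ^ 2 := by ring
    _ = 2 * (eulerProd x * eulerProd (-x) * eulerProd (x ^ 4)) ^ 2 := by
        rw [squareTheta_mul_eulerProd hx hx₀, pronicTheta_mul_eulerProd hx hx₀]
        ring
    _ = _ := by
        rw [eulerProd_mul_eulerProd_neg hx]
        ring

theorem eulerProd_pow_eight_sub_eulerProd_neg_pow_eight (hx : ‖x‖ < 1) :
    eulerProd x ^ 8 - eulerProd (-x) ^ 8 = -16 * x * eulerProd (x ^ 4) ^ 8 := by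
  obtain rfl | hx₀ := eq_or_ne x 0
  · simp
  have hnx : ‖-x‖ < 1 := by rwa [norm_neg]
  have hnx₀ : -x ≠ 0 := neg_ne_zero.mpr hx₀
  have theta_pos := squareTheta_mul_eulerProd hx hx₀
  have theta_neg := squareTheta_mul_eulerProd hnx hnx₀
  have dissect_pos := squareTheta_sq hx hx₀
  have dissect_neg := squareTheta_sq hnx hnx₀
  have product := squareTheta_mul_pronicTheta_mul_eulerProd_sq (norm_pow_lt_one hx two_ne_zero)
    (pow_ne_zero 2 hx₀)
  simp only [← pow_mul, neg_neg, neg_sq, Nat.reduceMul] at theta_neg dissect_neg product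
  calc eulerProd x ^ 8 - eulerProd (-x) ^ 8
    _ = ((squareTheta (-x) ^ 2) ^ 2 - (squareTheta x ^ 2) ^ 2) * eulerProd (x ^ 2) ^ 4 := by
        rw [show eulerProd x ^ 8 = (eulerProd x ^ 2) ^ 4 by ring,
          show eulerProd (-x) ^ 8 = (eulerProd (-x) ^ 2) ^ 4 by ring, ← theta_pos, ← theta_neg]
        ring
    _ = -4 * x * (squareTheta (x ^ 2) * pronicTheta (x ^ 2) * eulerProd (x ^ 2) ^ 2) ^ 2 := by
        rw [dissect_pos, dissect_neg]
        ring
    _ = -16 * x * eulerProd (x ^ 4) ^ 8 := by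
        rw [product]
        ring

end ThetaFunctions

section RootsOfUnity

lemma sum_pow_div_pow_eq_ite {K : Type*} [Field K] {ζ : K} {n : ℕ} [NeZero n]
    (hζ : IsPrimitiveRoot ζ n) (k r : ℕ) :
    ∑ j ∈ Finset.range n, (ζ ^ j) ^ k / (ζ ^ j) ^ r = if k ≡ r [MOD n] then (n : K) else 0 := by
  have hr : ζ ^ r ≠ 0 := pow_ne_zero r (hζ.ne_zero (NeZero.ne n))
  have eq_one_iff : ζ ^ k / ζ ^ r = 1 ↔ k ≡ r [MOD n] := by
    rw [div_eq_one_iff_eq hr, (hζ.isOfFinOrder (NeZero.ne n)).pow_eq_pow_iff_modEq, hζ.eq_orderOf]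
  have geometric (j : ℕ) : (ζ ^ j) ^ k / (ζ ^ j) ^ r = (ζ ^ k / ζ ^ r) ^ j := by
    rw [div_pow, pow_right_comm, pow_right_comm ζ j r]
  simp only [geometric]
  split_ifs with h
  · simp [eq_one_iff.mpr h]
  · refine (mul_eq_zero_iff_right (sub_ne_zero.mpr (eq_one_iff.not.mpr h))).mp ?_
    rw [geom_sum_mul, div_pow, pow_right_comm, pow_right_comm ζ r n, hζ.pow_eq_one]
    simp

lemma hasSum_ite_modEq {K : Type*} [Field K] [TopologicalSpace K] [IsTopologicalRing K]
    {ζ : K} {n : ℕ} [NeZero n] (hζ : IsPrimitiveRoot ζ n) {c f : ℕ → K} {x : K} (r : ℕ)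
    (hf : ∀ j, HasSum (fun k => c k * (ζ ^ j * x) ^ k) (f j)) :
    HasSum (fun k => if k ≡ r [MOD n] then c k * x ^ k else 0)
      ((∑ j ∈ Finset.range n, f j / (ζ ^ j) ^ r) / n) := by
  have hn : (n : K) ≠ 0 := hζ.neZero'.out
  have average := (hasSum_sum fun j (_ : j ∈ Finset.range n) =>
    (hf j).div_const ((ζ ^ j) ^ r)).div_const (n : K)
  refine average.congr_fun fun k => ?_
  calc (if k ≡ r [MOD n] then c k * x ^ k else 0)
    _ = c k * x ^ k * (if k ≡ r [MOD n] then (n : K) else 0) / n := by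
        split_ifs
        · rw [mul_div_cancel_right₀ _ hn]
        · rw [mul_zero, zero_div]
    _ = _ := by
        rw [← sum_pow_div_pow_eq_ite hζ, Finset.mul_sum]
        congr 1
        refine Finset.sum_congr rfl fun j _ => ?_
        rw [mul_pow]
        ring

theorem hasSum_ite_modEq_eulerProd_pow_div {𝕜 : Type*} [NormedField 𝕜] [CompleteSpace 𝕜]
    {ζ q : 𝕜} (hζ : IsPrimitiveRoot ζ 8) (hq : ‖q‖ < 1) {c : ℕ → 𝕜}
    (hc : ∀ j, HasSum (fun k => c k * (ζ ^ j * q) ^ k)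
      (eulerProd ((ζ ^ j * q) ^ 4) ^ 8 / eulerProd ((ζ ^ j * q) ^ 8) ^ 7)) :
    HasSum (fun k => if k ≡ 4 [MOD 8] then c k * q ^ k else 0)
      (-8 * q ^ 4 * (eulerProd (q ^ 16) ^ 8 / eulerProd (q ^ 8) ^ 7)) := by
  have eight_ne_zero : ((8 : ℕ) : 𝕜) ≠ 0 := hζ.neZero'.out
  have fourth_pow : ζ ^ 4 = -1 :=
    (hζ.pow (by norm_num) (by norm_num : 8 = 4 * 2)).eq_neg_one_of_two_right
  have fourth_pow_pow (j : ℕ) : (ζ ^ j) ^ 4 = (-1) ^ j := by rw [pow_right_comm, fourth_pow]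
  have eighth_pow_pow (j : ℕ) : (ζ ^ j) ^ 8 = 1 := by rw [pow_right_comm, hζ.pow_eq_one, one_pow]
  have difference := eulerProd_pow_eight_sub_eulerProd_neg_pow_eight
    (norm_pow_lt_one hq four_ne_zero)
  rw [← pow_mul, show 4 * 4 = 16 from rfl] at difference
  have average : (∑ j ∈ Finset.range 8,
      eulerProd ((-1) ^ j * q ^ 4) ^ 8 / eulerProd (q ^ 8) ^ 7 / (-1) ^ j) / (8 : ℕ) =
        -8 * q ^ 4 * (eulerProd (q ^ 16) ^ 8 / eulerProd (q ^ 8) ^ 7) := by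
    rw [div_eq_iff eight_ne_zero]
    simp only [Finset.sum_range_succ, Finset.sum_range_zero, pow_succ (-1 : 𝕜), pow_zero, one_mul,
      mul_neg, mul_one, neg_neg, neg_mul, Nat.cast_ofNat]
    linear_combination (4 / eulerProd (q ^ 8) ^ 7) * difference
  simpa only [mul_pow, fourth_pow_pow, eighth_pow_pow, one_mul, average] using
    hasSum_ite_modEq hζ 4 hc

end RootsOfUnity

section DedekindEta

lemma norm_nome_lt_one {τ : ℂ} (hτ : 0 < τ.im) : ‖nome τ‖ < 1 :=
  UpperHalfPlane.norm_exp_two_pi_I_lt_one ⟨τ, hτ⟩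

lemma nome_natCast_mul (n : ℕ) (τ : ℂ) : nome (n * τ) = nome τ ^ n := by
  rw [nome, nome, ← Complex.exp_nat_mul]
  ring_nf

lemma nome_add_natCast_div (n j : ℕ) (τ : ℂ) :
    nome (τ + j / n) = Complex.exp (2 * π * I / n) ^ j * nome τ := by
  rw [nome, nome, ← Complex.exp_nat_mul, ← Complex.exp_add]
  ring_nf

lemma dedekindEta_natCast_mul (n : ℕ) (τ : ℂ) :
    dedekindEta (n * τ) = Complex.exp (π * I * τ / 12) ^ n * eulerProd (nome τ ^ n) := by
  rw [dedekindEta, nome_natCast_mul, eulerProd, ← Complex.exp_nat_mul]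
  ring_nf

lemma exp_pi_mul_I_mul_div_twelve_pow (τ : ℂ) :
    Complex.exp (π * I * τ / 12) ^ 24 = nome τ := by
  rw [nome, ← Complex.exp_nat_mul]
  congr 1
  push_cast
  ring

lemma nome_mul_dedekindEta_four_mul_pow_div (τ : ℂ) :
    nome τ * (dedekindEta (4 * τ) ^ 8 / dedekindEta (8 * τ) ^ 7) =
      eulerProd (nome τ ^ 4) ^ 8 / eulerProd (nome τ ^ 8) ^ 7 := by
  have h₄ := dedekindEta_natCast_mul 4 τ
  have h₈ := dedekindEta_natCast_mul 8 τ
  have hexp := Complex.exp_ne_zero (π * I * τ / 12)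
  push_cast at h₄ h₈
  rw [h₄, h₈, mul_pow, mul_pow, ← exp_pi_mul_I_mul_div_twelve_pow]
  field_simp

lemma dedekindEta_sixteen_mul_pow_div (τ : ℂ) :
    dedekindEta (16 * τ) ^ 8 / dedekindEta (8 * τ) ^ 7 =
      nome τ ^ 3 * (eulerProd (nome τ ^ 16) ^ 8 / eulerProd (nome τ ^ 8) ^ 7) := by
  have h₈ := dedekindEta_natCast_mul 8 τ
  have h₁₆ := dedekindEta_natCast_mul 16 τ
  have hexp := Complex.exp_ne_zero (π * I * τ / 12)
  push_cast at h₈ h₁₆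
  rw [h₈, h₁₆, mul_pow, mul_pow, ← exp_pi_mul_I_mul_div_twelve_pow]
  field_simp

end DedekindEta

/-- let `c : ℕ → ℤ` be the coefficient sequence of the formal power series
`∏(1−X^{4n})⁸/∏(1−X^{8n})⁷`, characterized by `η(4τ)⁸/η(8τ)⁷ = Σ_{k≥0} c(k) q^{k−1}` on ℍ.
Then `Σ_{k≥0, k≡4 (8)} c(k) q^{k−1} = −8 η(16τ)⁸/η(8τ)⁷` for all `τ ∈ ℍ`. -/
theorem stmt6 (c : ℕ → ℤ)
    (hc : ∀ τ : ℂ, 0 < τ.im →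
      HasSum (fun k : ℕ => (c k : ℂ) * nome τ ^ k) (nome τ * (dedekindEta (4 * τ) ^ 8 / dedekindEta (8 * τ) ^ 7)))
    (τ : ℂ) (hτ : 0 < τ.im) :
    (nome τ)⁻¹ * ∑' k : ℕ, (if k % 8 = 4 then (c k : ℂ) else 0) * nome τ ^ k =
      -8 * dedekindEta (16 * τ) ^ 8 / dedekindEta (8 * τ) ^ 7 := by
  have rotated (j : ℕ) := hc (τ + j / (8 : ℕ)) (by simpa using hτ)
  simp only [nome_mul_dedekindEta_four_mul_pow_div] at rotated
  simp only [nome_add_natCast_div] at rotated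
  have four_mod_eight := hasSum_ite_modEq_eulerProd_pow_div
    (Complex.isPrimitiveRoot_exp 8 (by norm_num)) (norm_nome_lt_one hτ) rotated
  have nome_ne_zero : nome τ ≠ 0 := Complex.exp_ne_zero _
  calc (nome τ)⁻¹ * ∑' k : ℕ, (if k % 8 = 4 then (c k : ℂ) else 0) * nome τ ^ k
    _ = (nome τ)⁻¹ * (-8 * nome τ ^ 4 *
          (eulerProd (nome τ ^ 16) ^ 8 / eulerProd (nome τ ^ 8) ^ 7)) := by
        simp only [ite_mul, zero_mul]
        exact congrArg _ four_mod_eight.tsum_eq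
    _ = -8 * (dedekindEta (16 * τ) ^ 8 / dedekindEta (8 * τ) ^ 7) := by
        rw [dedekindEta_sixteen_mul_pow_div]
        field_simp
    _ = -8 * dedekindEta (16 * τ) ^ 8 / dedekindEta (8 * τ) ^ 7 := (mul_div_assoc _ _ _).symm
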